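/- arXiv:0809.1643 — 2 statements merged into one kernel-verified Lean document; each statement's English description precedes it below -/
import Mathlib

section
/- Let p < q be reals, let 1 ≤ r ≤ n be integers, let f be (n+1)-times continuously differentiable on [p,q], and let x, x_0, …, x_n be pairwise distinct points of [p,q]. Then there exists ξ in the smallest closed interval containing x, x_0, …, x_n such that f[x, x_0, …, x_{r−1}] = d_{r,r+1,…,n}[x] + (f^{(n+1)}(ξ)/(n+1)!)·∏_{i=r}^{n}(x − x_i). -/
/-- Divided difference `f[y i, y (i+1), …, y j]` defined by the standard recursion
`f[y_i,…,y_j] = (f[y_{i+1},…,y_j] − f[y_i,…,y_{j−1}])/(y_j − y_i)`. -/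
noncomputable def divDiff (f : ℝ → ℝ) (y : ℕ → ℝ) (i j : ℕ) : ℝ :=
  if _h : j ≤ i then f (y i)
  else (divDiff f y (i + 1) j - divDiff f y i (j - 1)) / (y j - y i)
termination_by j - i
decreasing_by all_goals omega

/-- Neville iteration: `neville xs x g i j` is the iterate built from the initial
values `g j` (at node `xs j`) over the nodes `xs j, …, xs (j+i)`. -/
noncomputable def neville (xs : ℕ → ℝ) (x : ℝ) (g : ℕ → ℝ) : ℕ → ℕ → ℝ
  | 0, j => g j
  | i + 1, j =>
      ((xs (i + 1 + j) - x) * neville xs x g i j - (xs j - x) * neville xs x g i (j + 1)) /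
        (xs (i + 1 + j) - xs j)

/-- Aitken iteration with base index `r`: `aitken xs x g r i j` is the iterate
`d_{r,r+1,…,i,j}` (for `r ≤ i < j`) built from the initial values `g j` at the nodes `xs j`. -/
noncomputable def aitken (xs : ℕ → ℝ) (x : ℝ) (g : ℕ → ℝ) (r : ℕ) (i j : ℕ) : ℝ :=
  if _h : i ≤ r then ((xs j - x) * g r - (xs r - x) * g j) / (xs j - xs r)
  else ((xs j - x) * aitken xs x g r (i - 1) i - (xs i - x) * aitken xs x g r (i - 1) j) /
        (xs j - xs i)
termination_by i
decreasing_by all_goals omega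

/-- The full Aitken iterate `d_{r,r+1,…,n}` (equal to the initial value when `n = r`). -/
noncomputable def aitkenLast (xs : ℕ → ℝ) (x : ℝ) (g : ℕ → ℝ) (r n : ℕ) : ℝ :=
  if n ≤ r then g n else aitken xs x g r (n - 1) n

/-- Confluent divided difference `g[x,…,x (m times), xi]`, defined using
`g[x,…,x (m times)] = g^{(m−1)}(x)/(m−1)!` and `g[xi] = g xi`. -/
noncomputable def confDD (g : ℝ → ℝ) (x xi : ℝ) : ℕ → ℝ
  | 0 => g xi
  | m + 1 => (confDD g x xi m - iteratedDeriv m g x / (Nat.factorial m : ℝ)) / (xi - x)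

/-! Let `D` be the divided difference of `f` at all the nodes `x, x_0, …, x_n`, and let `P` be the
interpolation polynomial of `f` at `x_0, …, x_n`. Newton's form of the interpolation error reads
`f x = P x + D · ∏_{i ≤ n} (x - x_i)`. Splitting the nodes at `r` gives `P = Q + N · G`, where `Q`
interpolates `f` at `x_0, …, x_{r-1}`, `N` is the monic polynomial with these roots, and `G`
interpolates `t ↦ f[t, x_0, …, x_{r-1}]` at `x_r, …, x_n`. Since
`f x = Q x + N x · f[x, x_0, …, x_{r-1}]`, dividing by `N x` leaves
`f[x, x_0, …, x_{r-1}] = G x + D · ∏_{r ≤ i ≤ n} (x - x_i)`. Aitken's iteration computes `G x`, and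
repeated use of Rolle's theorem on `f` minus its interpolation polynomial at all the nodes
evaluates `D`. -/

open Polynomial Finset Lagrange

section Interpolation

variable {F ι : Type*} [Field F] [DecidableEq ι] {s t : Finset ι} {v : ι → F} {i j : ι}

theorem eval_interpolate_eq_div_of_erase (r : ι → F) (a : F) (hv : Set.InjOn v s) (hi : i ∈ s)
    (hj : j ∈ s) (hij : i ≠ j) :
    (interpolate s v r).eval a =
      ((v j - a) * (interpolate (s.erase j) v r).eval a
        - (v i - a) * (interpolate (s.erase i) v r).eval a) / (v j - v i) := by
  have hji : v j - v i ≠ 0 := sub_ne_zero.mpr (hv.ne hj hi hij.symm)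
  have hij' : v i - v j ≠ 0 := sub_ne_zero.mpr (hv.ne hi hj hij)
  rw [interpolate_eq_add_interpolate_erase r hv hi hj hij]
  simp only [basisDivisor, eval_add, eval_mul, eval_C, eval_sub, eval_X]
  field_simp
  ring

theorem coeff_mul_basisDivisor {P : F[X]} {d : ℕ} (hP : P.degree < ↑(d + 1)) (a b : F) :
    (P * basisDivisor a b).coeff (d + 1) = P.coeff d / (a - b) := by
  rw [basisDivisor, mul_left_comm, coeff_C_mul, mul_sub, coeff_sub, coeff_mul_X, coeff_mul_C,
    coeff_eq_zero_of_degree_lt hP, zero_mul, sub_zero, inv_mul_eq_div]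

theorem coeff_interpolate_eq_div_of_erase (r : ι → F) {d : ℕ} (hs : #s = d + 2)
    (hv : Set.InjOn v s) (hi : i ∈ s) (hj : j ∈ s) (hij : i ≠ j) :
    (interpolate s v r).coeff (d + 1) =
      ((interpolate (s.erase i) v r).coeff d - (interpolate (s.erase j) v r).coeff d)
        / (v j - v i) := by
  have degree_erase_lt {k : ι} (hk : k ∈ s) : (interpolate (s.erase k) v r).degree < ↑(d + 1) := by
    simpa [hs] using degree_interpolate_erase_lt r hv hk
  rw [interpolate_eq_add_interpolate_erase r hv hi hj hij, coeff_add,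
    coeff_mul_basisDivisor (degree_erase_lt hj), coeff_mul_basisDivisor (degree_erase_lt hi),
    ← neg_sub (v j) (v i), div_neg, sub_div]
  ring

theorem interpolate_union_eq_add_nodal_mul (hst : Disjoint s t)
    (hv : Set.InjOn v (s ∪ t : Finset ι)) {f g : ι → F}
    (hfg : ∀ i ∈ t, f i = (interpolate s v f).eval (v i) + (nodal s v).eval (v i) * g i) :
    interpolate (s ∪ t) v f = interpolate s v f + nodal s v * interpolate t v g := by
  have hs : Set.InjOn v s := hv.mono (coe_subset.mpr subset_union_left)
  have ht : Set.InjOn v t := hv.mono (coe_subset.mpr subset_union_right)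
  refine (eq_interpolate_of_eval_eq f hv ?_ fun i hi => ?_).symm
  · rw [card_union_of_disjoint hst]
    refine (degree_add_le _ _).trans_lt (max_lt ?_ ?_)
    · exact (degree_interpolate_lt f hs).trans_le (by exact_mod_cast Nat.le_add_right _ _)
    · rw [degree_mul, degree_nodal, Nat.cast_add]
      exact WithBot.add_lt_add_left (WithBot.natCast_ne_bot _) (degree_interpolate_lt g ht)
  · rw [eval_add, eval_mul]
    rcases mem_union.mp hi with his | hit
    · rw [eval_interpolate_at_node f hs his, eval_nodal_at_node his, zero_mul, add_zero]
    · rw [eval_interpolate_at_node g ht hit, ← hfg i hit]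

end Interpolation

section DividedDifferences

theorem divDiff_self (f : ℝ → ℝ) (y : ℕ → ℝ) (i : ℕ) : divDiff f y i i = f (y i) := by
  rw [divDiff, dif_pos le_rfl]

theorem divDiff_succ (f : ℝ → ℝ) (y : ℕ → ℝ) {i j : ℕ} (hij : i ≤ j) :
    divDiff f y i (j + 1) =
      (divDiff f y (i + 1) (j + 1) - divDiff f y i j) / (y (j + 1) - y i) := by
  rw [divDiff, dif_neg (by lia), Nat.add_sub_cancel]

theorem divDiff_eq_coeff_interpolate (f : ℝ → ℝ) {y : ℕ → ℝ} {i d : ℕ}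
    (hy : Set.InjOn y (Icc i (i + d) : Finset ℕ)) :
    divDiff f y i (i + d) = (interpolate (Icc i (i + d)) y (f ∘ y)).coeff d := by
  induction d generalizing i with
  | zero => simp [divDiff_self]
  | succ d ih =>
    have erase_left : (Icc i (i + (d + 1))).erase i = Icc (i + 1) (i + 1 + d) := by
      ext k; simp only [mem_erase, mem_Icc]; lia
    have erase_right : (Icc i (i + (d + 1))).erase (i + (d + 1)) = Icc i (i + d) := by
      ext k; simp only [mem_erase, mem_Icc]; lia
    have hleft := ih (hy.mono (coe_subset.mpr (erase_left ▸ erase_subset _ _)))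
    have hright := ih (hy.mono (coe_subset.mpr (erase_right ▸ erase_subset _ _)))
    rw [coeff_interpolate_eq_div_of_erase (i := i) (j := i + (d + 1)) _ (by simp; lia) hy
      (by simp) (by simp) (by lia), erase_left, erase_right, ← hleft, ← hright, ← Nat.add_assoc,
      divDiff_succ f y (by lia), Nat.add_right_comm i d 1]

theorem divDiff_eq_coeff_of_eval_eq (f : ℝ → ℝ) {y : ℕ → ℝ} {d : ℕ} {P : ℝ[X]}
    (hy : Set.InjOn y (Set.Iic d)) (hdeg : P.natDegree ≤ d)
    (hP : ∀ k ≤ d, P.eval (y k) = f (y k)) : divDiff f y 0 d = P.coeff d := by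
  have hy' : Set.InjOn y (Icc 0 (0 + d) : Finset ℕ) := hy.mono fun k hk => by simpa using hk
  have hdeg' : P.degree < #(Icc 0 (0 + d)) :=
    (degree_le_of_natDegree_le hdeg).trans_lt (by rw [Nat.card_Icc]; exact_mod_cast by lia)
  have hinterp := divDiff_eq_coeff_interpolate f hy'
  rw [← eq_interpolate_of_eval_eq (f := P) (f ∘ y) hy' hdeg'
    fun k hk => hP k (by simpa using hk), Nat.zero_add] at hinterp
  exact hinterp

/-- The sequence `a, y 0, y 1, …`, so that `divDiff f (consSeq a y) 0 m` is
`f[a, y 0, …, y (m - 1)]`. -/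
def consSeq (a : ℝ) (y : ℕ → ℝ) : ℕ → ℝ :=
  fun i => if i = 0 then a else y (i - 1)

@[simp]
theorem consSeq_zero (a : ℝ) (y : ℕ → ℝ) : consSeq a y 0 = a := rfl

@[simp]
theorem consSeq_succ (a : ℝ) (y : ℕ → ℝ) (i : ℕ) : consSeq a y (i + 1) = y i := rfl

theorem consSeq_image_Iic_succ (a : ℝ) (y : ℕ → ℝ) (m : ℕ) :
    consSeq a y '' Set.Iic (m + 1) = insert a (y '' Set.Iic m) := by
  ext t
  constructor
  · rintro ⟨_ | i, hi, rfl⟩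
    · exact Set.mem_insert _ _
    · exact Set.mem_insert_of_mem _ ⟨i, Nat.le_of_succ_le_succ hi, rfl⟩
  · rintro (rfl | ⟨i, hi, rfl⟩)
    · exact ⟨0, Nat.zero_le _, rfl⟩
    · exact ⟨i + 1, Nat.succ_le_succ hi, rfl⟩

theorem injOn_consSeq {a : ℝ} {y : ℕ → ℝ} {m : ℕ} (hy : Set.InjOn y (Set.Iio m))
    (ha : ∀ i < m, y i ≠ a) : Set.InjOn (consSeq a y) (Set.Iic m) := by
  rintro (_ | i) hi (_ | j) hj hij
  · rfl
  · exact absurd hij.symm (ha j hj)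
  · exact absurd hij (ha i hi)
  · exact congrArg _ (hy hi hj hij)

theorem eq_eval_interpolate_add_nodal_mul_divDiff (f : ℝ → ℝ) {y : ℕ → ℝ} {m : ℕ} {a : ℝ}
    (hy : Set.InjOn y (Set.Iio m)) (ha : ∀ i < m, y i ≠ a) :
    f a = (interpolate (range m) y (f ∘ y)).eval a
      + (nodal (range m) y).eval a * divDiff f (consSeq a y) 0 m := by
  set Q := interpolate (range m) y (f ∘ y)
  set N := nodal (range m) y
  have hNa : N.eval a ≠ 0 :=
    eval_nodal_not_at_node fun i hi => (ha i (mem_range.mp hi)).symm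
  have hy' : Set.InjOn y (range m : Finset ℕ) := by rwa [coe_range]
  have hQ : Q.degree < m := by
    simpa only [card_range] using degree_interpolate_lt (f ∘ y) hy'
  have hN : N.natDegree = m := by rw [natDegree_nodal, card_range]
  have hNm : N.coeff m = 1 := by
    have := (nodal_monic (s := range m) (v := y)).coeff_natDegree
    rwa [hN] at this
  obtain ⟨c, hc⟩ : ∃ c, f a = Q.eval a + N.eval a * c :=
    ⟨(f a - Q.eval a) / N.eval a, by field_simp; ring⟩
  have hdeg : (Q + C c * N).natDegree ≤ m :=
    natDegree_add_le_of_degree_le (natDegree_le_of_degree_le hQ.le)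
      ((natDegree_C_mul_le c N).trans hN.le)
  have heval : ∀ k ≤ m, (Q + C c * N).eval (consSeq a y k) = f (consSeq a y k) := by
    rintro (_ | k) hk
    · simp [hc, mul_comm]
    · have hk' : k ∈ range m := mem_range.mpr hk
      rw [consSeq_succ, eval_add, eval_mul, eval_nodal_at_node hk', mul_zero, add_zero]
      exact eval_interpolate_at_node (f ∘ y) hy' hk'
  rw [divDiff_eq_coeff_of_eval_eq f (injOn_consSeq hy ha) hdeg heval, coeff_add, coeff_C_mul,
    coeff_eq_zero_of_degree_lt hQ, hNm, zero_add, mul_one, hc]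

end DividedDifferences

section AitkenIteration

variable (X : ℕ → ℝ) (x : ℝ) (g : ℕ → ℝ)

theorem aitken_self (r j : ℕ) :
    aitken X x g r r j = ((X j - x) * g r - (X r - x) * g j) / (X j - X r) := by
  rw [aitken, dif_pos le_rfl]

theorem aitken_succ {r i : ℕ} (hri : r ≤ i) (j : ℕ) :
    aitken X x g r (i + 1) j =
      ((X j - x) * aitken X x g r i (i + 1) - (X (i + 1) - x) * aitken X x g r i j)
        / (X j - X (i + 1)) := by
  rw [aitken, dif_neg (by lia), Nat.add_sub_cancel]

variable {X}

theorem aitken_eq_eval_interpolate {r i j : ℕ} (hri : r ≤ i) (hij : i < j)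
    (hX : Set.InjOn X (insert j (Icc r i) : Finset ℕ)) :
    aitken X x g r i j = (interpolate (insert j (Icc r i)) X g).eval x := by
  induction i, hri using Nat.le_induction generalizing j with
  | base =>
    have erase_left : (insert j (Icc r r)).erase r = {j} := by
      ext k; simp only [mem_erase, mem_insert, mem_Icc, mem_singleton]; lia
    have erase_right : (insert j (Icc r r)).erase j = {r} := by
      ext k; simp only [mem_erase, mem_insert, mem_Icc, mem_singleton]; lia
    rw [aitken_self, eval_interpolate_eq_div_of_erase (i := r) (j := j) g x hX (by simp) (by simp)
      hij.ne, erase_left, erase_right]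
    simp only [interpolate_singleton, eval_C]
  | succ i hri ih =>
    have erase_left : (insert j (Icc r (i + 1))).erase (i + 1) = insert j (Icc r i) := by
      ext k; simp only [mem_erase, mem_insert, mem_Icc]; lia
    have erase_right : (insert j (Icc r (i + 1))).erase j = insert (i + 1) (Icc r i) := by
      ext k; simp only [mem_erase, mem_insert, mem_Icc]; lia
    have hleft := ih (j := j) (by lia)
      (hX.mono (coe_subset.mpr (erase_left ▸ erase_subset _ _)))
    have hright := ih (j := i + 1) (by lia)
      (hX.mono (coe_subset.mpr (erase_right ▸ erase_subset _ _)))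
    rw [aitken_succ X x g hri, hleft, hright,
      eval_interpolate_eq_div_of_erase (i := i + 1) (j := j) g x hX (by simp; lia) (by simp)
        hij.ne, erase_left, erase_right]

theorem aitkenLast_eq_eval_interpolate {r n : ℕ} (hrn : r ≤ n)
    (hX : Set.InjOn X (Icc r n : Finset ℕ)) :
    aitkenLast X x g r n = (interpolate (Icc r n) X g).eval x := by
  rcases hrn.eq_or_lt with rfl | hlt
  · simp [aitkenLast]
  · have hIcc : insert n (Icc r (n - 1)) = Icc r n := by
      ext k; simp only [mem_insert, mem_Icc]; lia
    rw [aitkenLast, if_neg (by lia),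
      aitken_eq_eval_interpolate x g (by lia) (by lia) (by rwa [hIcc]), hIcc]

theorem divDiff_consSeq_eq_aitkenLast_add (f : ℝ → ℝ) {r n : ℕ} (hrn : r ≤ n)
    (hX : Set.InjOn X (Set.Iic n)) (hxX : ∀ i ≤ n, X i ≠ x) :
    divDiff f (consSeq x X) 0 r =
      aitkenLast X x (fun j => divDiff f (consSeq (X j) X) 0 r) r n
        + divDiff f (consSeq x X) 0 (n + 1) * ∏ i ∈ Icc r n, (x - X i) := by
  set g : ℕ → ℝ := fun j => divDiff f (consSeq (X j) X) 0 r
  have hdisj : Disjoint (range r) (Icc r n) := by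
    rw [Finset.disjoint_left]; intro k; simp only [mem_range, mem_Icc]; lia
  have hunion : range r ∪ Icc r n = range (n + 1) := by
    ext k; simp only [mem_union, mem_range, mem_Icc]; lia
  have hX_range : Set.InjOn X (Set.Iio r) := hX.mono fun k hk => (hk.trans_le hrn).le
  have hsplit : interpolate (range (n + 1)) X (f ∘ X) =
      interpolate (range r) X (f ∘ X) + nodal (range r) X * interpolate (Icc r n) X g := by
    rw [← hunion]
    refine interpolate_union_eq_add_nodal_mul hdisj (hX.mono fun k hk => ?_) fun j hj => ?_
    · rw [hunion, coe_range] at hk; exact Nat.le_of_lt_succ hk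
    · have ⟨hrj, hjn⟩ := mem_Icc.mp hj
      exact eq_eval_interpolate_add_nodal_mul_divDiff f hX_range fun k hk =>
        hX.ne (Set.mem_Iic.mpr (by lia)) hjn (by lia)
  have hnodal : (nodal (range (n + 1)) X).eval x =
      (nodal (range r) X).eval x * ∏ i ∈ Icc r n, (x - X i) := by
    rw [eval_nodal, eval_nodal, ← hunion, prod_union hdisj]
  have hnodal_ne : (nodal (range r) X).eval x ≠ 0 :=
    eval_nodal_not_at_node fun i hi => (hxX i (by have := mem_range.mp hi; lia)).symm
  have newton_r := eq_eval_interpolate_add_nodal_mul_divDiff f hX_range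
    fun i hi => hxX i (hi.trans_le hrn).le
  have newton_n := eq_eval_interpolate_add_nodal_mul_divDiff f (m := n + 1)
    (hX.mono fun k => Nat.le_of_lt_succ) fun i hi => hxX i (Nat.le_of_lt_succ hi)
  rw [hsplit, hnodal, eval_add, eval_mul] at newton_n
  rw [aitkenLast_eq_eval_interpolate x g hrn (hX.mono fun k hk => (mem_Icc.mp hk).2)]
  apply mul_left_cancel₀ hnodal_ne
  linear_combination newton_n - newton_r

end AitkenIteration

section MeanValue

theorem Ioo_subset_interior_convexHull {t : Set ℝ} {a b : ℝ} (ha : a ∈ t) (hb : b ∈ t) :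
    Set.Ioo a b ⊆ interior (convexHull ℝ t) :=
  interior_maximal (Set.Ioo_subset_Icc_self.trans ((convex_convexHull ℝ t).ordConnected.out
    (subset_convexHull ℝ t ha) (subset_convexHull ℝ t hb))) isOpen_Ioo

theorem exists_finset_deriv_eq_zero {t : Finset ℝ} {k : ℕ} (ht : #t = k + 1) {g : ℝ → ℝ}
    (hg : ContinuousOn g (convexHull ℝ t)) (hzero : ∀ z ∈ t, g z = 0) :
    ∃ u : Finset ℝ, #u = k ∧ ↑u ⊆ interior (convexHull ℝ (t : Set ℝ)) ∧ ∀ z ∈ u, deriv g z = 0 := by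
  let z : Fin (k + 1) ↪o ℝ := t.orderEmbOfFin ht
  have hz (i : Fin (k + 1)) : z i ∈ t := t.orderEmbOfFin_mem ht i
  have hrolle (i : Fin k) : ∃ c ∈ Set.Ioo (z i.castSucc) (z i.succ), deriv g c = 0 := by
    refine exists_deriv_eq_zero (z.strictMono i.castSucc_lt_succ) (hg.mono ?_) ?_
    · exact (convex_convexHull ℝ _).ordConnected.out (subset_convexHull ℝ _ (hz _))
        (subset_convexHull ℝ _ (hz _))
    · rw [hzero _ (hz _), hzero _ (hz _)]
  choose c hc hderiv using hrolle
  have hc_mono : StrictMono c := fun i j hij =>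
    (hc i).2.trans_le ((z.monotone (Fin.succ_le_castSucc_iff.mpr hij)).trans (hc j).1.le)
  refine ⟨univ.map ⟨c, hc_mono.injective⟩, by simp, ?_, by simpa using hderiv⟩
  simp only [coe_map, Function.Embedding.coeFn_mk, coe_univ, Set.image_univ, Set.range_subset_iff]
  exact fun i => Ioo_subset_interior_convexHull (hz _) (hz _) (hc i)

theorem exists_finset_derivWithin_eq_zero {s : Set ℝ} (hs : Convex ℝ s) {t : Finset ℝ} {k : ℕ}
    (ht : #t = k + 1) (hts : ↑t ⊆ s) {g : ℝ → ℝ} (hg : ContinuousOn g s)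
    (hzero : ∀ z ∈ t, g z = 0) :
    ∃ u : Finset ℝ, #u = k ∧ ↑u ⊆ interior (convexHull ℝ (t : Set ℝ)) ∧
      ∀ z ∈ u, derivWithin g s z = 0 := by
  have hull_subset : convexHull ℝ ↑t ⊆ s := convexHull_min hts hs
  obtain ⟨u, hu, hut, hderiv⟩ := exists_finset_deriv_eq_zero ht (hg.mono hull_subset) hzero
  refine ⟨u, hu, hut, fun z hz => ?_⟩
  have hzs : z ∈ interior s := interior_mono hull_subset (hut hz)
  rw [derivWithin_of_mem_nhds (mem_interior_iff_mem_nhds.mp hzs), hderiv z hz]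

theorem exists_iteratedDerivWithin_eq_zero {s : Set ℝ} (hs : Convex ℝ s) {n : ℕ} {g : ℝ → ℝ}
    (hg : ContDiffOn ℝ n g s) {t : Finset ℝ} (hcard : #t = n + 2) (hts : ↑t ⊆ s)
    (hzero : ∀ z ∈ t, g z = 0) :
    ∃ ξ ∈ interior (convexHull ℝ (t : Set ℝ)), iteratedDerivWithin (n + 1) g s ξ = 0 := by
  induction n generalizing g t with
  | zero =>
    obtain ⟨u, hu, hut, hderiv⟩ :=
      exists_finset_derivWithin_eq_zero hs hcard hts hg.continuousOn hzero
    obtain ⟨ξ, hξ⟩ := card_pos.mp (by lia : 0 < #u)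
    exact ⟨ξ, hut hξ, by rw [zero_add, iteratedDerivWithin_one, hderiv ξ hξ]⟩
  | succ n ih =>
    obtain ⟨u, hu, hut, hderiv⟩ :=
      exists_finset_derivWithin_eq_zero hs hcard hts hg.continuousOn hzero
    have hus : ↑u ⊆ interior s := hut.trans (interior_mono (convexHull_min hts hs))
    obtain ⟨w, hw⟩ := card_pos.mp (by lia : 0 < #u)
    have hs' : UniqueDiffOn ℝ s := uniqueDiffOn_convex hs ⟨w, hus hw⟩
    obtain ⟨ξ, hξ, hξ0⟩ :=
      ih (hg.derivWithin hs' (by norm_cast)) hu (hus.trans interior_subset) hderiv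
    have hull_subset : convexHull ℝ (u : Set ℝ) ⊆ convexHull ℝ (t : Set ℝ) :=
      convexHull_min (hut.trans interior_subset) (convex_convexHull ℝ _)
    exact ⟨ξ, interior_mono hull_subset hξ, by rw [iteratedDerivWithin_succ', hξ0]⟩

section NormedField

variable {𝕜 : Type*} [NontriviallyNormedField 𝕜]

theorem iteratedDeriv_eval_of_natDegree_le {P : 𝕜[X]} {m : ℕ} (hP : P.natDegree ≤ m) (a : 𝕜) :
    iteratedDeriv m (fun t => P.eval t) a = m.factorial * P.coeff m := by
  have hsemiconj : Function.Semiconj (fun (Q : 𝕜[X]) t => Q.eval t) derivative deriv :=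
    fun Q => funext fun t => Q.deriv.symm
  have hconst : derivative^[m] P = C (m.factorial * P.coeff m) := by
    have hdeg := natDegree_iterate_derivative P m
    rw [eq_C_of_natDegree_le_zero (hdeg.trans (by lia)), coeff_iterate_derivative, zero_add,
      Nat.descFactorial_self, nsmul_eq_mul]
  rw [iteratedDeriv_eq_iterate, ← (hsemiconj.iterate_right m).eq P, hconst]
  exact eval_C

theorem iteratedDerivWithin_succ_sub {E : Type*} [NormedAddCommGroup E] [NormedSpace 𝕜 E]
    {s : Set 𝕜} (hs : UniqueDiffOn 𝕜 s) {n : ℕ} {f g : 𝕜 → E} {a : 𝕜} (ha : a ∈ s)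
    (hf : ContDiffOn 𝕜 n f s) (hf' : DifferentiableWithinAt 𝕜 (iteratedDerivWithin n f s) s a)
    (hg : ContDiffOn 𝕜 n g s) (hg' : DifferentiableWithinAt 𝕜 (iteratedDerivWithin n g s) s a) :
    iteratedDerivWithin (n + 1) (f - g) s a =
      iteratedDerivWithin (n + 1) f s a - iteratedDerivWithin (n + 1) g s a := by
  have hsub : Set.EqOn (iteratedDerivWithin n (f - g) s)
      (iteratedDerivWithin n f s - iteratedDerivWithin n g s) s :=
    fun y hy => iteratedDerivWithin_sub hy hs (hf y hy) (hg y hy)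
  simp only [iteratedDerivWithin_succ]
  rw [derivWithin_congr hsub (hsub ha), derivWithin_sub hf' hg']

end NormedField

variable {s : Set ℝ} {n : ℕ} {f : ℝ → ℝ}

theorem exists_coeff_eq_iteratedDerivWithin_div_factorial (hs : Convex ℝ s)
    (hf : ContDiffOn ℝ n f s)
    (hf' : DifferentiableOn ℝ (iteratedDerivWithin n f s) (interior s)) {t : Finset ℝ}
    (hcard : #t = n + 2) (hts : ↑t ⊆ s) {P : ℝ[X]} (hdeg : P.natDegree ≤ n + 1)
    (hP : ∀ z ∈ t, P.eval z = f z) :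
    ∃ ξ ∈ interior (convexHull ℝ (t : Set ℝ)),
      P.coeff (n + 1) = iteratedDerivWithin (n + 1) f s ξ / (n + 1).factorial := by
  have hPs (m : ℕ) : ContDiff ℝ m fun a => P.eval a := by simpa using P.contDiff_aeval (𝕜 := ℝ) m
  obtain ⟨ξ, hξ, hzero⟩ := exists_iteratedDerivWithin_eq_zero hs
    (hf.sub (hPs n).contDiffOn) hcard hts fun z hz => sub_eq_zero.mpr (hP z hz).symm
  have hξs : ξ ∈ interior s := interior_mono (convexHull_min hts hs) hξ
  have hs' : UniqueDiffOn ℝ s := uniqueDiffOn_convex hs ⟨ξ, hξs⟩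
  have hderiv : iteratedDerivWithin (n + 1) f s ξ = (n + 1).factorial * P.coeff (n + 1) := by
    rw [← iteratedDeriv_eval_of_natDegree_le hdeg ξ, ← iteratedDerivWithin_eq_iteratedDeriv hs'
      (hPs _).contDiffAt (interior_subset hξs), ← sub_eq_zero,
      ← iteratedDerivWithin_succ_sub hs' (interior_subset hξs) hf
        ((hf' ξ hξs).differentiableAt (isOpen_interior.mem_nhds hξs)).differentiableWithinAt
        (hPs n).contDiffOn
        ((hPs (n + 1)).contDiffOn.differentiableOn_iteratedDerivWithin (by norm_cast; lia) hs' ξ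
          (interior_subset hξs))]
    exact hzero
  exact ⟨ξ, hξ, by rw [hderiv, mul_div_cancel_left₀ _ (by positivity)]⟩

theorem exists_divDiff_eq_iteratedDerivWithin_div_factorial (hs : Convex ℝ s)
    (hf : ContDiffOn ℝ n f s)
    (hf' : DifferentiableOn ℝ (iteratedDerivWithin n f s) (interior s)) {y : ℕ → ℝ}
    (hy : Set.InjOn y (Set.Iic (n + 1))) (hys : y '' Set.Iic (n + 1) ⊆ s) :
    ∃ ξ ∈ interior (convexHull ℝ (y '' Set.Iic (n + 1))),
      divDiff f y 0 (n + 1) = iteratedDerivWithin (n + 1) f s ξ / (n + 1).factorial := by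
  rw [← coe_Iic] at hy
  let t := (Iic (n + 1)).image y
  have hcoe : (t : Set ℝ) = y '' Set.Iic (n + 1) := by simp [t]
  have hcard : #t = n + 2 := by simp [t, card_image_of_injOn hy]
  let P := interpolate (Iic (n + 1)) y (f ∘ y)
  have hdeg : P.natDegree ≤ n + 1 := natDegree_le_of_degree_le <| by
    simpa only [Nat.card_Iic, Nat.add_sub_cancel] using degree_interpolate_le (f ∘ y) hy
  have hP : ∀ k ≤ n + 1, P.eval (y k) = f (y k) := fun k hk =>
    eval_interpolate_at_node (f ∘ y) hy (mem_Iic.mpr hk)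
  rw [divDiff_eq_coeff_of_eval_eq f (by rwa [← coe_Iic]) hdeg hP, ← hcoe]
  refine exists_coeff_eq_iteratedDerivWithin_div_factorial hs hf hf' hcard (hcoe ▸ hys) hdeg ?_
  simpa [t] using hP

end MeanValue

theorem stmt_1_general {s : Set ℝ} (hs : Convex ℝ s) {r n : ℕ} (hrn : r ≤ n) {f : ℝ → ℝ}
    (hf : ContDiffOn ℝ n f s)
    (hf' : DifferentiableOn ℝ (iteratedDerivWithin n f s) (interior s)) {x : ℝ} {X : ℕ → ℝ}
    (hx : x ∈ s) (hX : ∀ i ≤ n, X i ∈ s) (hxX : ∀ i ≤ n, X i ≠ x)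
    (hXX : Set.InjOn X (Set.Iic n)) :
    ∃ ξ ∈ interior (convexHull ℝ (insert x (X '' Set.Iic n))),
      divDiff f (consSeq x X) 0 r =
        aitkenLast X x (fun j => divDiff f (consSeq (X j) X) 0 r) r n
          + iteratedDerivWithin (n + 1) f s ξ / (n + 1).factorial
            * ∏ i ∈ Icc r n, (x - X i) := by
  have hinj : Set.InjOn (consSeq x X) (Set.Iic (n + 1)) :=
    injOn_consSeq (hXX.mono fun i hi => Nat.le_of_lt_succ hi)
      fun i hi => hxX i (Nat.le_of_lt_succ hi)
  have hmem : consSeq x X '' Set.Iic (n + 1) ⊆ s := by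
    rw [consSeq_image_Iic_succ]
    exact Set.insert_subset hx (Set.image_subset_iff.mpr hX)
  obtain ⟨ξ, hξ, hmean⟩ := exists_divDiff_eq_iteratedDerivWithin_div_factorial hs hf hf' hinj hmem
  rw [consSeq_image_Iic_succ] at hξ
  exact ⟨ξ, hξ, hmean ▸ divDiff_consSeq_eq_aitkenLast_add x f hrn hXX hxX⟩

theorem stmt_1 (p q : ℝ) (hpq : p < q) (r n : ℕ) (hr : 1 ≤ r) (hrn : r ≤ n)
    (f : ℝ → ℝ) (hf : ContDiffOn ℝ (n + 1 : ℕ) f (Set.Icc p q))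
    (x : ℝ) (X : ℕ → ℝ)
    (hx : x ∈ Set.Icc p q) (hX : ∀ i ≤ n, X i ∈ Set.Icc p q)
    (hxX : ∀ i ≤ n, X i ≠ x)
    (hXX : ∀ i j, i ≤ n → j ≤ n → i ≠ j → X i ≠ X j) :
    ∃ ξ ∈ convexHull ℝ (insert x (X '' Set.Iic n)),
      divDiff f (fun i => if i = 0 then x else X (i - 1)) 0 r
        = aitkenLast X x (fun j => divDiff f (fun i => if i = 0 then X j else X (i - 1)) 0 r) r n
          + iteratedDerivWithin (n + 1) f (Set.Icc p q) ξ / (Nat.factorial (n + 1) : ℝ)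
            * ∏ i ∈ Finset.Icc r n, (x - X i) := by
  obtain ⟨ξ, hξ, hremainder⟩ := stmt_1_general (convex_Icc p q) hrn
    (hf.of_le (by norm_cast; lia))
    ((hf.differentiableOn_iteratedDerivWithin (by norm_cast; lia) (uniqueDiffOn_Icc hpq)).mono
      interior_subset) hx hX hxX fun i hi j hj => not_imp_not.mp (hXX i j hi hj)
  exact ⟨ξ, interior_subset hξ, hremainder⟩
end

section
/- Let p < q be reals, let n ≥ 1 and k ≥ 0 be integers, let f be (n+k+1)-times continuously differentiable on [p,q], and let x, x_0, …, x_n be pairwise distinct points of [p,q]. Then there exists ξ in the smallest closed interval containing x, x_0, …, x_n such that Σ_{r=0}^{k} (f^{(k−r)}(x)/(k−r)!)·N_r(x) = Ñ^{(k)}_{0,1,…,n}[x] + (f^{(n+k+1)}(ξ)/(n+k+1)!)·∏_{i=0}^{n}(x − x_i). -/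
/-!
The Neville iterate is the value at `x` of the Lagrange interpolation polynomial. By linearity, the
sum minus the iterate of `f (x_j) / (x_j - x) ^ k` is therefore `L x`, where `L` interpolates
`(T - f) / (· - x) ^ k` at the nodes and `T` is the Taylor polynomial of `f` at `x` of degree `k`.

With `w = ∏ (X - x_i)` and `a = L x / w x`, the polynomial `T - (X - x) ^ k * (L - a * w)` agrees
with `f` at every node, and to order `k` at `x` because `L - a * w` vanishes there. It has degree at
most `n + k + 1` and its coefficient of that order is `a`. Rolle's theorem with multiplicities,
applied to its difference with `f`, gives a `ξ` at which the derivative of `f` of order `n + k + 1`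
is `(n + k + 1)! * a`.
-/

open Polynomial

section Interpolation

theorem neville_eq_eval_interpolate {X : ℕ → ℝ} {i j : ℕ}
    (hX : Set.InjOn X (Finset.Icc j (j + i))) (x : ℝ) (g : ℕ → ℝ) :
    neville X x g i j = (Lagrange.interpolate (Finset.Icc j (j + i)) X g).eval x := by
  induction i generalizing j with
  | zero => simp [neville]
  | succ i ih =>
    have erase_right : (Finset.Icc j (j + (i + 1))).erase (i + 1 + j) = Finset.Icc j (j + i) := by
      grind
    have erase_left : (Finset.Icc j (j + (i + 1))).erase j = Finset.Icc (j + 1) (j + 1 + i) := by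
      grind
    have hleft := ih (hX.mono (by rw [← erase_right]; exact Finset.erase_subset _ _))
    have hright := ih (hX.mono (by rw [← erase_left]; exact Finset.erase_subset _ _))
    have hj : j ∈ Finset.Icc j (j + (i + 1)) := by grind
    have hj' : i + 1 + j ∈ Finset.Icc j (j + (i + 1)) := by grind
    have hne : X (i + 1 + j) - X j ≠ 0 := sub_ne_zero.2 (hX.ne hj' hj (by lia))
    have hne' : X j - X (i + 1 + j) ≠ 0 := sub_ne_zero.2 (hX.ne hj hj' (by lia))
    rw [neville, hleft, hright,
      Lagrange.interpolate_eq_add_interpolate_erase g hX hj hj' (by lia), erase_right, erase_left]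
    simp only [Lagrange.basisDivisor, eval_add, eval_mul, eval_sub, eval_C, eval_X]
    field_simp
    ring

theorem exists_polynomial_interpolating_dvd_sub {K ι : Type*} [Field K] [DecidableEq ι]
    {A : Finset ι} {v : ι → K} (hv : Set.InjOn v A) {x : K} (hx : ∀ i ∈ A, v i ≠ x) (k : ℕ)
    {T : K[X]} (hT : T.degree < ↑(A.card + k)) (y : ι → K) :
    ∃ R : K[X], R.natDegree ≤ A.card + k ∧ (X - C x) ^ (k + 1) ∣ R - T ∧
      (∀ i ∈ A, R.eval (v i) = y i) ∧
      R.coeff (A.card + k) * (Lagrange.nodal A v).eval x =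
        (Lagrange.interpolate A v fun i => (T.eval (v i) - y i) / (v i - x) ^ k).eval x := by
  set L := Lagrange.interpolate A v fun i => (T.eval (v i) - y i) / (v i - x) ^ k with hL
  set w := Lagrange.nodal A v with hw
  have hwx : w.eval x ≠ 0 := Lagrange.eval_nodal_not_at_node fun i hi => (hx i hi).symm
  set a := L.eval x / w.eval x with ha
  have hdegL : ((X - C x) ^ k * L).degree < ↑(A.card + k) := by
    rw [degree_mul, degree_pow, degree_X_sub_C, nsmul_one, add_comm, Nat.cast_add]
    exact WithBot.add_lt_add_right (WithBot.natCast_ne_bot k) (Lagrange.degree_interpolate_lt _ hv)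
  have hmonic : ((X - C x) ^ k * w).Monic := ((monic_X_sub_C x).pow k).mul Lagrange.nodal_monic
  have hdegw : ((X - C x) ^ k * w).natDegree = A.card + k := by
    rw [((monic_X_sub_C x).pow k).natDegree_mul Lagrange.nodal_monic, natDegree_pow,
      natDegree_X_sub_C, mul_one, Lagrange.natDegree_nodal, add_comm]
  -- `a` is chosen so that `L - a * w` vanishes at `x`: this is the extra factor of `X - C x`.
  refine ⟨T - (X - C x) ^ k * L + C a * ((X - C x) ^ k * w), ?_, ?_, ?_, ?_⟩
  · refine natDegree_add_le_of_degree_le (natDegree_sub_le_of_le (m := A.card + k) ?_ ?_ |>.trans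
      (max_self _).le) ((natDegree_C_mul_le _ _).trans hdegw.le)
    · exact natDegree_le_of_degree_le hT.le
    · exact natDegree_le_of_degree_le hdegL.le
  · have hroot : X - C x ∣ C a * w - L := by
      rw [dvd_iff_isRoot, IsRoot.def, eval_sub, eval_mul, eval_C, ha, div_mul_cancel₀ _ hwx,
        sub_self]
    convert mul_dvd_mul_left ((X - C x) ^ k) hroot using 1
    all_goals ring
  · intro i hi
    have hne : v i - x ≠ 0 := sub_ne_zero.2 (hx i hi)
    simp only [eval_add, eval_sub, eval_mul, eval_pow, eval_X, eval_C, hL, hw,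
      Lagrange.eval_interpolate_at_node _ hv hi, Lagrange.eval_nodal_at_node hi]
    field_simp
    ring
  · rw [coeff_add, coeff_sub, coeff_C_mul, coeff_eq_zero_of_degree_lt hT,
      coeff_eq_zero_of_degree_lt hdegL, ← hdegw, hmonic.coeff_natDegree, sub_zero, zero_add,
      mul_one, ha, div_mul_cancel₀ _ hwx]

end Interpolation

section Derivatives

theorem eval_iterate_derivative_of_natDegree_le {R : Type*} [CommSemiring R] {P : R[X]} {n : ℕ}
    (hP : P.natDegree ≤ n) (y : R) :
    (derivative^[n] P).eval y = n.factorial * P.coeff n := by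
  have hdeg : (derivative^[n] P).natDegree ≤ 0 :=
    (natDegree_iterate_derivative P n).trans (Nat.sub_eq_zero_of_le hP).le
  rw [eq_C_of_natDegree_le_zero hdeg, eval_C, coeff_iterate_derivative, zero_add,
    Nat.descFactorial_self, nsmul_eq_mul]

theorem eval_iterate_derivative_eq_of_pow_dvd_sub {R : Type*} [CommRing R] {P Q : R[X]} {x : R}
    {n m : ℕ} (h : (X - C x) ^ n ∣ P - Q) (hm : m < n) :
    (derivative^[m] P).eval x = (derivative^[m] Q).eval x := by
  have hdvd : X - C x ∣ derivative^[m] (P - Q) :=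
    (dvd_pow_self _ (Nat.sub_ne_zero_of_lt hm)).trans
      (pow_sub_dvd_iterate_derivative_of_pow_dvd m h)
  rw [← sub_eq_zero, ← eval_sub, ← iterate_derivative_sub]
  exact dvd_iff_isRoot.1 hdvd

theorem iteratedDerivWithin_eval {𝕜 : Type*} [NontriviallyNormedField 𝕜] {s : Set 𝕜}
    (hs : UniqueDiffOn 𝕜 s) (P : 𝕜[X]) (m : ℕ) {y : 𝕜} (hy : y ∈ s) :
    iteratedDerivWithin m (fun t => P.eval t) s y = (derivative^[m] P).eval y := by
  induction m generalizing y with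
  | zero => simp
  | succ m ih =>
    rw [iteratedDerivWithin_succ, derivWithin_congr (fun _ hz => ih hz) (ih hy),
      Polynomial.derivWithin _ (hs y hy), Function.iterate_succ_apply']

/-- The degree-`n` Taylor polynomial of `f` at `x`, with derivatives taken within `s`. It is an
element of `ℝ[X]`, so that it can be differentiated and evaluated as a polynomial, whereas Mathlib's
`taylorWithin` lives in `PolynomialModule ℝ E`. -/
noncomputable def taylorPolynomialWithin (f : ℝ → ℝ) (n : ℕ) (s : Set ℝ) (x : ℝ) : ℝ[X] :=
  ∑ i ∈ Finset.range (n + 1), C (taylorCoeffWithin f i s x) * (X - C x) ^ i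

variable (f : ℝ → ℝ) (n : ℕ) (s : Set ℝ) (x : ℝ)

theorem natDegree_taylorPolynomialWithin_le : (taylorPolynomialWithin f n s x).natDegree ≤ n := by
  refine natDegree_sum_le_of_forall_le _ _ fun i hi => (natDegree_C_mul_le _ _).trans ?_
  rw [natDegree_pow, natDegree_X_sub_C, mul_one]
  exact Finset.mem_range_succ_iff.1 hi

theorem eval_iterate_derivative_taylorPolynomialWithin {n m : ℕ} (hm : m ≤ n) :
    (derivative^[m] (taylorPolynomialWithin f n s x)).eval x = iteratedDerivWithin m f s x := by
  have hcoeff :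
      (taylor x (taylorPolynomialWithin f n s x)).coeff m = taylorCoeffWithin f m s x := by
    simp only [taylorPolynomialWithin, map_sum, taylor_mul, taylor_pow, taylor_C, map_sub, taylor_X,
      add_sub_cancel_right, finsetSum_coeff, coeff_C_mul_X_pow]
    rw [Finset.sum_ite_eq, if_pos (Finset.mem_range_succ_iff.2 hm)]
  rw [← factorial_smul_hasseDeriv, LinearMap.smul_apply, eval_smul, ← taylor_coeff, hcoeff,
    taylorCoeffWithin, nsmul_eq_mul, smul_eq_mul, mul_inv_cancel_left₀ (by positivity)]

theorem eval_taylorPolynomialWithin_div_pow {y : ℝ} (hy : y ≠ x) :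
    (taylorPolynomialWithin f n s x).eval y / (y - x) ^ n =
      ∑ r ∈ Finset.range (n + 1), taylorCoeffWithin f (n - r) s x * (1 / (y - x) ^ r) := by
  have hne : y - x ≠ 0 := sub_ne_zero.2 hy
  rw [taylorPolynomialWithin, eval_finsetSum, ← Finset.sum_range_reflect, Finset.sum_div]
  refine Finset.sum_congr rfl fun r hr => ?_
  have hpow : (y - x) ^ n = (y - x) ^ (n - r) * (y - x) ^ r := by
    rw [← pow_add, Nat.sub_add_cancel (Finset.mem_range_succ_iff.1 hr)]
  simp only [add_tsub_cancel_right, eval_mul, eval_C, eval_pow, eval_sub, eval_X, hpow]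
  rw [mul_comm, mul_div_mul_left _ _ (pow_ne_zero _ hne), mul_one_div]

theorem interpolate_taylor_sub_div_pow {ι : Type*} [DecidableEq ι] {A : Finset ι} {v : ι → ℝ}
    (hv : ∀ i ∈ A, v i ≠ x) (y : ι → ℝ) :
    Lagrange.interpolate A v
        (fun i => ((taylorPolynomialWithin f n s x).eval (v i) - y i) / (v i - x) ^ n) =
      ∑ r ∈ Finset.range (n + 1), taylorCoeffWithin f (n - r) s x •
          Lagrange.interpolate A v (fun i => 1 / (v i - x) ^ r) -
        Lagrange.interpolate A v fun i => y i / (v i - x) ^ n := by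
  simp only [← map_smul, ← map_sum, ← map_sub]
  refine Lagrange.interpolate_eq_of_values_eq_on _ _ fun i hi => ?_
  simp only [sub_div, eval_taylorPolynomialWithin_div_pow f n s x (hv i hi), Pi.sub_apply,
    Finset.sum_apply, Pi.smul_apply, smul_eq_mul]

end Derivatives

section Rolle

/-- The points of `S` are zeros of `F` within `s`, counted with multiplicity: at a point occurring
`c` times in `S`, the derivatives of `F` within `s` of order `0, …, c - 1` vanish. -/
def HasZerosWithin (F : ℝ → ℝ) (s : Set ℝ) (S : Multiset ℝ) : Prop :=
  ∀ a, ∀ m < S.count a, iteratedDerivWithin m F s a = 0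

variable {s : Set ℝ} {F : ℝ → ℝ}

theorem HasZerosWithin.eq_zero {S : Multiset ℝ} (h : HasZerosWithin F s S) {a : ℝ} (ha : a ∈ S) :
    F a = 0 :=
  h a 0 (Multiset.count_pos.2 ha)

theorem exists_derivWithin_eq_zero (hs : s.OrdConnected) (hF : ContinuousOn F s) {a b : ℝ}
    (ha : a ∈ s) (hb : b ∈ s) (hab : a < b) (h : F a = F b) :
    ∃ c ∈ Set.Ioo a b, derivWithin F s c = 0 := by
  obtain ⟨c, hc, hc'⟩ := exists_deriv_eq_zero hab (hF.mono (hs.out ha hb)) h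
  have hnhds : s ∈ nhds c := Filter.mem_of_superset (Icc_mem_nhds hc.1 hc.2) (hs.out ha hb)
  exact ⟨c, hc, (derivWithin_of_mem_nhds hnhds).trans hc'⟩

theorem exists_finset_derivWithin_eq_zero_s4 (hs : s.OrdConnected) (hF : ContinuousOn F s)
    {A : Finset ℝ} (hA : ↑A ⊆ s) (hz : ∀ a ∈ A, F a = 0) :
    ∃ B : Finset ℝ, ↑B ⊆ convexHull ℝ (A : Set ℝ) ∧ Disjoint A B ∧
      (∀ b ∈ B, derivWithin F s b = 0) ∧ A.card ≤ B.card + 1 := by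
  have hrolle : ∀ a ∈ A, ∀ b ∈ A, a < b → ∃ c ∈ Set.Ioo a b, derivWithin F s c = 0 :=
    fun a ha b hb hab =>
      exists_derivWithin_eq_zero hs hF (hA ha) (hA hb) hab ((hz a ha).trans (hz b hb).symm)
  choose! c hc hc' using hrolle
  set Z := (A.offDiag.filter fun e => e.1 < e.2).image fun e => c e.1 e.2 with hZ
  have mem_Z {z : ℝ} : z ∈ Z ↔ ∃ a ∈ A, ∃ b ∈ A, a < b ∧ c a b = z := by
    simp only [hZ, Finset.mem_image, Finset.mem_filter, Finset.mem_offDiag, Prod.exists]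
    grind
  refine ⟨Z \ A, ?_, Finset.disjoint_sdiff, ?_, ?_⟩
  · intro z hz
    obtain ⟨a, ha, b, hb, hab, rfl⟩ := mem_Z.1 (Finset.mem_sdiff.1 hz).1
    exact (convex_convexHull ℝ _).ordConnected.out (subset_convexHull ℝ _ ha)
      (subset_convexHull ℝ _ hb) (Set.Ioo_subset_Icc_self (hc a ha b hb hab))
  · intro z hz
    obtain ⟨a, ha, b, hb, hab, rfl⟩ := mem_Z.1 (Finset.mem_sdiff.1 hz).1
    exact hc' a ha b hb hab
  · exact Finset.card_le_sdiff_of_interleaved fun a ha b hb hab _ =>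
      ⟨c a b, mem_Z.2 ⟨a, ha, b, hb, hab, rfl⟩, hc a ha b hb hab⟩

theorem HasZerosWithin.exists_derivWithin {S : Multiset ℝ} (h : HasZerosWithin F s S)
    (hs : s.OrdConnected) (hF : ContinuousOn F s) (hS : {a | a ∈ S} ⊆ s) :
    ∃ T : Multiset ℝ, HasZerosWithin (derivWithin F s) s T ∧
      {b | b ∈ T} ⊆ convexHull ℝ {a | a ∈ S} ∧ S.card ≤ T.card + 1 := by
  have hcoe : (S.toFinset : Set ℝ) = {a | a ∈ S} := Set.ext fun _ => Multiset.mem_toFinset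
  obtain ⟨B, hBS, hdisj, hB, hcard⟩ := exists_finset_derivWithin_eq_zero_s4 hs hF (A := S.toFinset)
    (hcoe ▸ hS) (fun a ha => h.eq_zero (Multiset.mem_toFinset.1 ha))
  rw [hcoe] at hBS
  -- Each old zero loses one multiplicity, and Rolle's theorem supplies the new simple zeros `B`.
  refine ⟨S - S.dedup + B.val, fun b m hm => ?_, fun b hb => ?_, ?_⟩
  · rw [Multiset.count_add, Multiset.count_sub, Multiset.count_dedup] at hm
    by_cases hb : b ∈ B
    · have hbS : b ∉ S := fun h => Finset.disjoint_right.1 hdisj hb (Multiset.mem_toFinset.2 h)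
      rw [Multiset.count_eq_zero_of_notMem hbS, Multiset.count_eq_one_of_mem B.nodup hb] at hm
      obtain rfl : m = 0 := by lia
      exact hB b hb
    · rw [Multiset.count_eq_zero_of_notMem (s := B.val) hb] at hm
      rw [← iteratedDerivWithin_succ']
      have hbS : b ∈ S := Multiset.count_pos.1 (by lia)
      rw [if_pos hbS] at hm
      exact h b (m + 1) (by lia)
  · rcases Multiset.mem_add.1 hb with hb | hb
    · exact subset_convexHull ℝ _ (Multiset.mem_of_le (Multiset.sub_le_self _ _) hb)
    · exact hBS hb
  · rw [Multiset.card_toFinset] at hcard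
    have := Multiset.card_le_card (Multiset.dedup_le S)
    rw [Multiset.card_add, Multiset.card_sub (Multiset.dedup_le S), Finset.card_val]
    lia

theorem HasZerosWithin.exists_iteratedDerivWithin_eq_zero {S : Multiset ℝ}
    (h : HasZerosWithin F s S) (hs : s.OrdConnected) (hs' : UniqueDiffOn ℝ s) {n : ℕ}
    (hF : ContDiffOn ℝ n F s) (hS : {a | a ∈ S} ⊆ s) (hcard : n < S.card) :
    ∃ ξ ∈ convexHull ℝ {a | a ∈ S}, iteratedDerivWithin n F s ξ = 0 := by
  induction n generalizing F S with
  | zero =>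
    obtain ⟨a, ha⟩ := Multiset.card_pos_iff_exists_mem.1 hcard
    exact ⟨a, subset_convexHull ℝ _ ha, h.eq_zero ha⟩
  | succ n ih =>
    obtain ⟨T, hT, hTS, hcardT⟩ := h.exists_derivWithin hs hF.continuousOn hS
    obtain ⟨ξ, hξ, hξ0⟩ := ih hT (hF.derivWithin hs' (by norm_cast))
      (hTS.trans (convexHull_min hS hs.convex)) (by lia)
    exact ⟨ξ, convexHull_min hTS (convex_convexHull ℝ _) hξ, by rwa [iteratedDerivWithin_succ']⟩

end Rolle

section MeanValue

variable {s : Set ℝ} {f : ℝ → ℝ}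

theorem exists_iteratedDerivWithin_eq_factorial_mul_coeff (hs : s.OrdConnected)
    (hs' : UniqueDiffOn ℝ s) {n : ℕ} (hf : ContDiffOn ℝ n f s) {S : Multiset ℝ}
    (hS : {a | a ∈ S} ⊆ s) (hcard : S.card = n + 1) {P : ℝ[X]} (hP : P.natDegree ≤ n)
    (hPf : ∀ a, ∀ m < S.count a, (derivative^[m] P).eval a = iteratedDerivWithin m f s a) :
    ∃ ξ ∈ convexHull ℝ {a | a ∈ S}, iteratedDerivWithin n f s ξ = n.factorial * P.coeff n := by
  have hPs : ContDiffOn ℝ n (fun t => P.eval t) s := by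
    simpa only [coe_aeval_eq_eval] using (P.contDiff_aeval (𝕜 := ℝ) n).contDiffOn
  have hsub {m : ℕ} (hm : m ≤ n) {a : ℝ} (ha : a ∈ s) :
      iteratedDerivWithin m (f - fun t => P.eval t) s a =
        iteratedDerivWithin m f s a - (derivative^[m] P).eval a := by
    rw [iteratedDerivWithin_sub ha hs' ((hf a ha).of_le (by exact_mod_cast hm))
      ((hPs a ha).of_le (by exact_mod_cast hm)), iteratedDerivWithin_eval hs' P m ha]
  have hzeros : HasZerosWithin (f - fun t => P.eval t) s S := by
    intro a m hm
    have ha : a ∈ S := Multiset.count_pos.1 (Nat.zero_lt_of_lt hm)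
    have hmn : m ≤ n := by
      have := S.count_le_card a
      lia
    rw [hsub hmn (hS ha), hPf a m hm, sub_self]
  obtain ⟨ξ, hξ, hξ0⟩ :=
    hzeros.exists_iteratedDerivWithin_eq_zero hs hs' (hf.sub hPs) hS (by lia)
  refine ⟨ξ, hξ, ?_⟩
  rwa [hsub le_rfl (convexHull_min hS hs.convex hξ), sub_eq_zero,
    eval_iterate_derivative_of_natDegree_le hP] at hξ0

variable {ι : Type*} {A : Finset ι} {v : ι → ℝ} {x : ℝ} {k : ℕ}

theorem exists_iteratedDerivWithin_eq_factorial_mul_coeff_of_contact (hs : s.OrdConnected)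
    (hs' : UniqueDiffOn ℝ s) (hv : Set.InjOn v A) (hvs : ∀ i ∈ A, v i ∈ s) (hx : x ∈ s)
    (hvx : ∀ i ∈ A, v i ≠ x) (hf : ContDiffOn ℝ ↑(A.card + k) f s) {P : ℝ[X]}
    (hP : P.natDegree ≤ A.card + k) (hPv : ∀ i ∈ A, P.eval (v i) = f (v i))
    (hPx : ∀ m ≤ k, (derivative^[m] P).eval x = iteratedDerivWithin m f s x) :
    ∃ ξ ∈ convexHull ℝ (insert x (v '' A)),
      iteratedDerivWithin (A.card + k) f s ξ = (A.card + k).factorial * P.coeff (A.card + k) := by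
  set V : Multiset ℝ := A.val.map v
  set S : Multiset ℝ := Multiset.replicate (k + 1) x + V with hS
  have hV {a : ℝ} : a ∈ V ↔ ∃ i ∈ A, v i = a := Multiset.mem_map
  have hVnodup : V.Nodup := A.nodup.map_on fun i hi j hj => hv hi hj
  have hxV : x ∉ V := fun h => let ⟨i, hi, hix⟩ := hV.1 h; hvx i hi hix
  have hSset : {a | a ∈ S} = insert x (v '' A) := by
    ext a
    rw [Set.mem_ofPred_eq, hS, Multiset.mem_add, Multiset.mem_replicate, hV,
      and_iff_right k.succ_ne_zero]
    rfl
  have hSs : {a | a ∈ S} ⊆ s := hSset ▸ Set.insert_subset hx (Set.image_subset_iff.2 hvs)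
  have hcard : S.card = A.card + k + 1 := by
    rw [hS, Multiset.card_add, Multiset.card_replicate, Multiset.card_map, Finset.card_val]
    lia
  rw [← hSset]
  refine exists_iteratedDerivWithin_eq_factorial_mul_coeff hs hs' hf hSs hcard hP
    fun a m hm => ?_
  rw [hS, Multiset.count_add, Multiset.count_replicate] at hm
  split_ifs at hm with hxa
  · subst hxa
    rw [Multiset.count_eq_zero_of_notMem hxV, add_zero] at hm
    exact hPx m (Nat.lt_succ_iff.1 hm)
  · rw [zero_add] at hm
    obtain ⟨i, hi, rfl⟩ := hV.1 (Multiset.count_pos.1 (Nat.zero_lt_of_lt hm))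
    obtain rfl : m = 0 :=
      Nat.lt_one_iff.1 (hm.trans_le (Multiset.nodup_iff_count_le_one.1 hVnodup _))
    exact hPv i hi

theorem exists_eval_interpolate_taylor_sub_div_pow_eq [DecidableEq ι] (hs : s.OrdConnected)
    (hs' : UniqueDiffOn ℝ s) (hv : Set.InjOn v A) (hvs : ∀ i ∈ A, v i ∈ s) (hx : x ∈ s)
    (hvx : ∀ i ∈ A, v i ≠ x) (hf : ContDiffOn ℝ ↑(A.card + k) f s) (hA : A.Nonempty) :
    ∃ ξ ∈ convexHull ℝ (insert x (v '' A)),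
      (Lagrange.interpolate A v fun i =>
          ((taylorPolynomialWithin f k s x).eval (v i) - f (v i)) / (v i - x) ^ k).eval x =
        iteratedDerivWithin (A.card + k) f s ξ / (A.card + k).factorial *
          ∏ i ∈ A, (x - v i) := by
  have hT : (taylorPolynomialWithin f k s x).degree < ↑(A.card + k) :=
    (natDegree_le_iff_degree_le.1 (natDegree_taylorPolynomialWithin_le f k s x)).trans_lt
      (by exact_mod_cast Nat.lt_add_of_pos_left hA.card_pos)
  obtain ⟨R, hRdeg, hRT, hRv, hRcoeff⟩ :=
    exists_polynomial_interpolating_dvd_sub hv hvx k hT fun i => f (v i)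
  obtain ⟨ξ, hξ, hfξ⟩ :=
    exists_iteratedDerivWithin_eq_factorial_mul_coeff_of_contact hs hs' hv hvs hx hvx hf hRdeg hRv
      fun m hm => (eval_iterate_derivative_eq_of_pow_dvd_sub hRT (Nat.lt_succ_iff.2 hm)).trans
        (eval_iterate_derivative_taylorPolynomialWithin f s x hm)
  refine ⟨ξ, hξ, ?_⟩
  rw [← hRcoeff, hfξ, mul_div_cancel_left₀ _ (by positivity), Lagrange.eval_nodal]

end MeanValue

theorem stmt_4 (p q : ℝ) (hpq : p < q) (n k : ℕ) (hn : 1 ≤ n)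
    (f : ℝ → ℝ) (hf : ContDiffOn ℝ (n + k + 1 : ℕ) f (Set.Icc p q))
    (x : ℝ) (X : ℕ → ℝ)
    (hx : x ∈ Set.Icc p q) (hX : ∀ i ≤ n, X i ∈ Set.Icc p q)
    (hxX : ∀ i ≤ n, X i ≠ x)
    (hXX : ∀ i j, i ≤ n → j ≤ n → i ≠ j → X i ≠ X j) :
    ∃ ξ ∈ convexHull ℝ (insert x (X '' Set.Iic n)),
      (∑ r ∈ Finset.range (k + 1),
          iteratedDerivWithin (k - r) f (Set.Icc p q) x / (Nat.factorial (k - r) : ℝ)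
            * neville X x (fun j => 1 / (X j - x) ^ r) n 0)
        = neville X x (fun j => f (X j) / (X j - x) ^ k) n 0
          + iteratedDerivWithin (n + k + 1) f (Set.Icc p q) ξ / (Nat.factorial (n + k + 1) : ℝ)
            * ∏ i ∈ Finset.range (n + 1), (x - X i) := by
  have hinj : Set.InjOn X (Finset.Iic n) := fun i hi j hj hij => by
    by_contra hne
    exact hXX i j (Finset.mem_Iic.1 hi) (Finset.mem_Iic.1 hj) hne hij
  have hneville (g : ℕ → ℝ) :
      neville X x g n 0 = (Lagrange.interpolate (Finset.Iic n) X g).eval x := by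
    have hIic : Finset.Icc 0 (0 + n) = Finset.Iic n := by rw [zero_add]; rfl
    rw [neville_eq_eval_interpolate (hIic ▸ hinj), hIic]
  have hXne : ∀ i ∈ Finset.Iic n, X i ≠ x := fun i hi => hxX i (Finset.mem_Iic.1 hi)
  have hcard : (Finset.Iic n).card + k = n + k + 1 := by rw [Nat.card_Iic]; lia
  obtain ⟨ξ, hξ, herror⟩ := exists_eval_interpolate_taylor_sub_div_pow_eq Set.ordConnected_Icc
    (uniqueDiffOn_Icc hpq) hinj (fun i hi => hX i (Finset.mem_Iic.1 hi)) hx hXne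
    (hcard ▸ hf) Finset.nonempty_Iic
  rw [interpolate_taylor_sub_div_pow f k _ x hXne, eval_sub, eval_finsetSum, sub_eq_iff_eq_add',
    hcard, ← Nat.range_succ_eq_Iic] at herror
  refine ⟨ξ, by simpa only [Finset.coe_Iic] using hξ, ?_⟩
  simpa only [hneville, taylorCoeffWithin, eval_smul, smul_eq_mul, div_eq_inv_mul,
    Nat.range_succ_eq_Iic] using herror
end
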